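/- Let x, y ∈ ℂⁿ be orthogonal unit vectors and let Φ be a quantum channel on n×n complex matrices. If there exists λ̂ ∈ (0,1) such that Φ ∘ Ψ_{λ̂,x,y}^{-1} is completely positive, then Φ ∘ Ψ_{λ,x,y}^{-1} is completely positive for every λ ∈ [0, λ̂]. -/

import Mathlib

/-!
For a complex parameter `s`, put `D_s(ρ) = S_s ρ S_s† + (1 - |s|²) y x† ρ x y†`, where `S_s` scales
the unit vector `x` by `s` and fixes its orthogonal complement. Since `y` is orthogonal to `x`,
one has `S_s y x† = y x†`, `y x† S_t = t y x†` and `(y x†)² = 0`, which gives `D_s ∘ D_t = D_{st}`.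
In this family `Ψ_λ` is `D_s` for `s = √(1 - λ)` and its inverse is `D_{1/s}`, so
`Ψ_λ⁻¹ = Ψ_λ̂⁻¹ ∘ D_r` with `r = √(1 - λ̂) / √(1 - λ)`. For `λ ≤ λ̂` this `r` is at most `1`, hence
`D_r` is a sum of maps `ρ ↦ A ρ A†` with nonnegative weights, and precomposition with such a map
preserves complete positivity.
-/

open Matrix Kronecker
open scoped ComplexOrder

noncomputable section

/-- The linear map `ρ ↦ A ρ Bᴴ`. -/
def sandwich₂ {m n : ℕ} (A B : Matrix (Fin m) (Fin n) ℂ) :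
    Matrix (Fin n) (Fin n) ℂ →ₗ[ℂ] Matrix (Fin m) (Fin m) ℂ where
  toFun ρ := A * ρ * Bᴴ
  map_add' X Y := by simp [Matrix.mul_add, Matrix.add_mul]
  map_smul' c X := by simp [Matrix.mul_smul, Matrix.smul_mul]

/-- The linear map `ρ ↦ A ρ Aᴴ`. -/
def sandwich {m n : ℕ} (A : Matrix (Fin m) (Fin n) ℂ) :
    Matrix (Fin n) (Fin n) ℂ →ₗ[ℂ] Matrix (Fin m) (Fin m) ℂ :=
  sandwich₂ A A

/-- The Choi matrix `C(Φ) = ∑ⱼₖ Eⱼₖ ⊗ Φ(Eⱼₖ)`. -/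
def Choi {n m : ℕ} (Φ : Matrix (Fin n) (Fin n) ℂ →ₗ[ℂ] Matrix (Fin m) (Fin m) ℂ) :
    Matrix (Fin n × Fin m) (Fin n × Fin m) ℂ :=
  ∑ j : Fin n, ∑ k : Fin n,
    (Matrix.single j k (1 : ℂ)) ⊗ₖ Φ (Matrix.single j k (1 : ℂ))

/-- Vectorization: `vec X = ∑ⱼ eⱼ ⊗ X eⱼ`, i.e. `(vec X) (j, i) = X i j`. -/
def vec {m n : ℕ} (X : Matrix (Fin m) (Fin n) ℂ) : Fin n × Fin m → ℂ :=
  fun p => X p.2 p.1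

/-- Complete positivity (via the Choi characterization). -/
def IsCP {n : ℕ} (Φ : Matrix (Fin n) (Fin n) ℂ →ₗ[ℂ] Matrix (Fin n) (Fin n) ℂ) : Prop :=
  (Choi Φ).PosSemidef

/-- Trace preservation. -/
def IsTP {n : ℕ} (Φ : Matrix (Fin n) (Fin n) ℂ →ₗ[ℂ] Matrix (Fin n) (Fin n) ℂ) : Prop :=
  ∀ ρ, (Φ ρ).trace = ρ.trace

/-- Quantum channel: completely positive and trace preserving. -/
def IsChannel {n : ℕ} (Φ : Matrix (Fin n) (Fin n) ℂ →ₗ[ℂ] Matrix (Fin n) (Fin n) ℂ) : Prop :=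
  IsCP Φ ∧ IsTP Φ

/-- `K_λ = 1 - (1 - √(1-λ)) x x†`. -/
def Kmat {n : ℕ} (lam : ℝ) (x : Fin n → ℂ) : Matrix (Fin n) (Fin n) ℂ :=
  1 - ((1 - Real.sqrt (1 - lam) : ℝ) : ℂ) • Matrix.vecMulVec x (star x)

/-- `L_λ = √λ y x†`. -/
def Lmat {n : ℕ} (lam : ℝ) (x y : Fin n → ℂ) : Matrix (Fin n) (Fin n) ℂ :=
  ((Real.sqrt lam : ℝ) : ℂ) • Matrix.vecMulVec y (star x)

/-- The elementary channel `Ψ_{λ,x,y} = K_λ (·) K_λ† + L_λ (·) L_λ†`. -/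
def Psi {n : ℕ} (lam : ℝ) (x y : Fin n → ℂ) :
    Matrix (Fin n) (Fin n) ℂ →ₗ[ℂ] Matrix (Fin n) (Fin n) ℂ :=
  sandwich (Kmat lam x) + sandwich (Lmat lam x y)

/-- For `λ ∈ [0,1)` and `⟨x,y⟩ = 0`, the inverse of `Ψ_{λ,x,y}`:
`Ψ_{λ,x,y}⁻¹ = K_λ⁻¹ (·) K_λ⁻¹ - (1-λ)⁻¹ L_λ (·) L_λ†`. -/
def PsiInv {n : ℕ} (lam : ℝ) (x y : Fin n → ℂ) :
    Matrix (Fin n) (Fin n) ℂ →ₗ[ℂ] Matrix (Fin n) (Fin n) ℂ :=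
  sandwich (Kmat lam x)⁻¹ - (((1 - lam)⁻¹ : ℝ) : ℂ) • sandwich (Lmat lam x y)

/-- `Φ` is conjugation by a unitary. -/
def IsUnitaryConj {n : ℕ} (Φ : Matrix (Fin n) (Fin n) ℂ →ₗ[ℂ] Matrix (Fin n) (Fin n) ℂ) : Prop :=
  ∃ U ∈ Matrix.unitaryGroup (Fin n) ℂ, ∀ ρ, Φ ρ = U * ρ * Uᴴ

/-- A quantum channel is divisible if it factors into two channels neither of which is
a unitary conjugation. -/
def Divisible {n : ℕ} (Φ : Matrix (Fin n) (Fin n) ℂ →ₗ[ℂ] Matrix (Fin n) (Fin n) ℂ) : Prop :=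
  ∃ Φ₁ Φ₂ : Matrix (Fin n) (Fin n) ℂ →ₗ[ℂ] Matrix (Fin n) (Fin n) ℂ,
    IsChannel Φ₁ ∧ IsChannel Φ₂ ∧ Φ = Φ₁ ∘ₗ Φ₂ ∧ ¬ IsUnitaryConj Φ₁ ∧ ¬ IsUnitaryConj Φ₂

/-- `Z = conj(x) conj(x⊥)† ⊗ 1`. -/
def Zmat {n : ℕ} (x xp : Fin n → ℂ) : Matrix (Fin n × Fin n) (Fin n × Fin n) ℂ :=
  (Matrix.vecMulVec (star x) xp) ⊗ₖ (1 : Matrix (Fin n) (Fin n) ℂ)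

section Sandwich

variable {l m n : ℕ}

theorem sandwich_apply (A : Matrix (Fin m) (Fin n) ℂ) (ρ : Matrix (Fin n) (Fin n) ℂ) :
    sandwich A ρ = A * ρ * Aᴴ := rfl

theorem sandwich_zero : sandwich (0 : Matrix (Fin m) (Fin n) ℂ) = 0 := by
  ext1 ρ
  simp [sandwich_apply]

theorem sandwich_smul (c : ℂ) (A : Matrix (Fin m) (Fin n) ℂ) :
    sandwich (c • A) = (c * star c) • sandwich A := by
  ext1 ρ
  simp [sandwich_apply, smul_smul, mul_comm]

theorem sandwich_comp_sandwich (A : Matrix (Fin l) (Fin m) ℂ) (B : Matrix (Fin m) (Fin n) ℂ) :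
    sandwich A ∘ₗ sandwich B = sandwich (A * B) := by
  ext1 ρ
  simp [sandwich_apply, Matrix.mul_assoc]

theorem sandwich_single (A : Matrix (Fin m) (Fin n) ℂ) (j k : Fin n) :
    sandwich A (single j k 1) = ∑ p, ∑ q, (A p j * star (A q k)) • single p q (1 : ℂ) := by
  rw [matrix_eq_sum_single (sandwich A (single j k 1))]
  refine Finset.sum_congr rfl fun p _ => Finset.sum_congr rfl fun q _ => ?_
  simp [sandwich_apply, Matrix.mul_apply, single_apply, ite_and]

end Sandwich

section Choi

variable {l m n : ℕ}

theorem choi_apply (Φ : Matrix (Fin n) (Fin n) ℂ →ₗ[ℂ] Matrix (Fin m) (Fin m) ℂ)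
    (j k : Fin n) (a b : Fin m) : Choi Φ (j, a) (k, b) = Φ (single j k 1) a b := by
  simp [Choi, Matrix.sum_apply, single_apply, ite_and]

theorem choi_add (Φ Θ : Matrix (Fin n) (Fin n) ℂ →ₗ[ℂ] Matrix (Fin m) (Fin m) ℂ) :
    Choi (Φ + Θ) = Choi Φ + Choi Θ := by
  ext ⟨j, a⟩ ⟨k, b⟩
  simp [choi_apply]

theorem choi_smul (c : ℂ) (Φ : Matrix (Fin n) (Fin n) ℂ →ₗ[ℂ] Matrix (Fin m) (Fin m) ℂ) :
    Choi (c • Φ) = c • Choi Φ := by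
  ext ⟨j, a⟩ ⟨k, b⟩
  simp [choi_apply]

theorem choi_comp_sandwich (Φ : Matrix (Fin n) (Fin n) ℂ →ₗ[ℂ] Matrix (Fin m) (Fin m) ℂ)
    (A : Matrix (Fin n) (Fin l) ℂ) :
    Choi (Φ ∘ₗ sandwich A) =
      (Aᵀ ⊗ₖ (1 : Matrix (Fin m) (Fin m) ℂ)) * Choi Φ *
        (Aᵀ ⊗ₖ (1 : Matrix (Fin m) (Fin m) ℂ))ᴴ := by
  ext ⟨j, a⟩ ⟨k, b⟩
  calc Choi (Φ ∘ₗ sandwich A) (j, a) (k, b)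
      = ∑ p, ∑ q, A p j * star (A q k) * Choi Φ (p, a) (q, b) := by
        simp only [choi_apply, LinearMap.comp_apply, sandwich_single, map_sum, map_smul,
          Matrix.sum_apply, Matrix.smul_apply, smul_eq_mul]
    _ = ∑ q, ∑ p, A p j * Choi Φ (p, a) (q, b) * star (A q k) := by
        rw [Finset.sum_comm]
        simp only [mul_right_comm]
    _ = _ := by
        simp [Matrix.mul_apply, Fintype.sum_prod_type, one_apply, apply_ite, Finset.sum_mul]

theorem posSemidef_choi_comp_sandwich
    {Φ : Matrix (Fin n) (Fin n) ℂ →ₗ[ℂ] Matrix (Fin m) (Fin m) ℂ} (hΦ : (Choi Φ).PosSemidef)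
    (A : Matrix (Fin n) (Fin l) ℂ) :
    (Choi (Φ ∘ₗ sandwich A)).PosSemidef := by
  rw [choi_comp_sandwich]
  exact hΦ.mul_mul_conjTranspose_same _

end Choi

section ScaleAlong

variable {ι R : Type*} [DecidableEq ι] [CommRing R] [StarRing R]

/-- The matrix `1 - (1 - s) x x†`. When `x` is a unit vector, it scales `x` by `s` and fixes the
orthogonal complement of `x`. It interpolates between the matrices `K_λ` and their inverses. -/
def scaleAlong (s : R) (x : ι → R) : Matrix ι ι R :=
  1 - (1 - s) • vecMulVec x (star x)

theorem scaleAlong_one (x : ι → R) : scaleAlong 1 x = 1 := by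
  simp [scaleAlong]

variable [Fintype ι] {x y : ι → R}

theorem scaleAlong_mul_vecMulVec_of_orthogonal (hxy : star x ⬝ᵥ y = 0) (s : R) (z : ι → R) :
    scaleAlong s x * vecMulVec y z = vecMulVec y z := by
  simp [scaleAlong, Matrix.sub_mul, vecMulVec_mul_vecMulVec, hxy]

theorem vecMulVec_star_mul_scaleAlong (hx : star x ⬝ᵥ x = 1) (y : ι → R) (s : R) :
    vecMulVec y (star x) * scaleAlong s x = s • vecMulVec y (star x) := by
  simp [scaleAlong, Matrix.mul_sub, vecMulVec_mul_vecMulVec, hx, sub_smul]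

theorem scaleAlong_mul_scaleAlong (hx : star x ⬝ᵥ x = 1) (s t : R) :
    scaleAlong s x * scaleAlong t x = scaleAlong (s * t) x := by
  rw [scaleAlong, Matrix.sub_mul, Matrix.smul_mul, vecMulVec_star_mul_scaleAlong hx]
  simp only [scaleAlong, Matrix.one_mul]
  module

theorem inv_scaleAlong (hx : star x ⬝ᵥ x = 1) {s t : R} (hst : s * t = 1) :
    (scaleAlong s x)⁻¹ = scaleAlong t x :=
  inv_eq_right_inv <| by rw [scaleAlong_mul_scaleAlong hx, hst, scaleAlong_one]

end ScaleAlong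

section Damping

variable {m n : ℕ} {x y : Fin n → ℂ}

/-- The map `D_s(ρ) = S_s ρ S_s† + (1 - |s|²) y x† ρ x y†` with `S_s = scaleAlong s x`. For
orthonormal `x, y` and real `0 < s ≤ 1` it is the channel `Ψ_{1-s²,x,y}`, damping the amplitude
along `x` by the factor `s` and moving the lost weight to `y`; for real `s > 1` it is the inverse
of such a channel. The squared modulus is written `s * star s`. -/
def damping (s : ℂ) (x y : Fin n → ℂ) :
    Matrix (Fin n) (Fin n) ℂ →ₗ[ℂ] Matrix (Fin n) (Fin n) ℂ :=
  sandwich (scaleAlong s x) + (1 - s * star s) • sandwich (vecMulVec y (star x))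

theorem damping_comp_damping (hx : star x ⬝ᵥ x = 1) (hxy : star x ⬝ᵥ y = 0) (s t : ℂ) :
    damping s x y ∘ₗ damping t x y = damping (s * t) x y := by
  have hnil : vecMulVec y (star x) * vecMulVec y (star x) = 0 := by
    simp [vecMulVec_mul_vecMulVec, hxy]
  simp only [damping, LinearMap.comp_add, LinearMap.add_comp, LinearMap.smul_comp,
    LinearMap.comp_smul, sandwich_comp_sandwich, scaleAlong_mul_scaleAlong hx,
    scaleAlong_mul_vecMulVec_of_orthogonal hxy, vecMulVec_star_mul_scaleAlong hx, hnil,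
    sandwich_smul, sandwich_zero, star_mul]
  module

theorem posSemidef_choi_comp_damping
    {Φ : Matrix (Fin n) (Fin n) ℂ →ₗ[ℂ] Matrix (Fin m) (Fin m) ℂ} (hΦ : (Choi Φ).PosSemidef)
    {s : ℂ} (hs : s * star s ≤ 1) (x y : Fin n → ℂ) :
    (Choi (Φ ∘ₗ damping s x y)).PosSemidef := by
  rw [damping, LinearMap.comp_add, LinearMap.comp_smul, choi_add, choi_smul]
  exact (posSemidef_choi_comp_sandwich hΦ _).add
    ((posSemidef_choi_comp_sandwich hΦ _).smul (sub_nonneg.2 hs))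

theorem kmat_eq_scaleAlong (lam : ℝ) (x : Fin n → ℂ) :
    Kmat lam x = scaleAlong (√(1 - lam) : ℂ) x := by
  simp [Kmat, scaleAlong]

theorem sandwich_lmat {lam : ℝ} (hlam : 0 ≤ lam) (x y : Fin n → ℂ) :
    sandwich (Lmat lam x y) = (lam : ℂ) • sandwich (vecMulVec y (star x)) := by
  rw [Lmat, sandwich_smul, Complex.star_def, Complex.conj_ofReal, ← Complex.ofReal_mul,
    Real.mul_self_sqrt hlam]

theorem psiInv_eq_damping (hx : star x ⬝ᵥ x = 1) (y : Fin n → ℂ) {lam : ℝ}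
    (hlam : lam ∈ Set.Ico (0 : ℝ) 1) :
    PsiInv lam x y = damping ((√(1 - lam))⁻¹ : ℝ) x y := by
  have hpos : 0 < 1 - lam := sub_pos.2 hlam.2
  have hinv : (√(1 - lam) : ℂ) * ((√(1 - lam))⁻¹ : ℝ) = 1 := by
    rw [← Complex.ofReal_mul, mul_inv_cancel₀ (Real.sqrt_pos.2 hpos).ne', Complex.ofReal_one]
  have hweight : 1 - (√(1 - lam))⁻¹ * (√(1 - lam))⁻¹ = -((1 - lam)⁻¹ * lam) := by
    rw [← mul_inv, Real.mul_self_sqrt hpos.le]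
    field_simp
    ring
  rw [PsiInv, damping, kmat_eq_scaleAlong, inv_scaleAlong hx hinv, sandwich_lmat hlam.1, smul_smul,
    sub_eq_add_neg, ← neg_smul, Complex.star_def, Complex.conj_ofReal]
  congr 2
  exact_mod_cast hweight.symm

theorem psiInv_eq_psiInv_comp_damping (hx : star x ⬝ᵥ x = 1) (hxy : star x ⬝ᵥ y = 0)
    {lam mu : ℝ} (hlam : lam ∈ Set.Ico (0 : ℝ) 1) (hmu : mu ∈ Set.Ico (0 : ℝ) 1) :
    PsiInv lam x y = PsiInv mu x y ∘ₗ damping (√(1 - mu) / √(1 - lam) : ℝ) x y := by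
  have hmu_ne : √(1 - mu) ≠ 0 := (Real.sqrt_pos.2 (sub_pos.2 hmu.2)).ne'
  rw [psiInv_eq_damping hx y hlam, psiInv_eq_damping hx y hmu, damping_comp_damping hx hxy,
    ← Complex.ofReal_mul, div_eq_mul_inv, inv_mul_cancel_left₀ hmu_ne]

end Damping

theorem cp_of_cp_le_general {n m : ℕ} {x y : Fin n → ℂ}
    (hx : star x ⬝ᵥ x = 1) (hxy : star x ⬝ᵥ y = 0)
    (Φ : Matrix (Fin n) (Fin n) ℂ →ₗ[ℂ] Matrix (Fin m) (Fin m) ℂ)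
    {lam lamhat : ℝ} (hlam : 0 ≤ lam) (hle : lam ≤ lamhat) (hlamhat : lamhat < 1)
    (hCP : (Choi (Φ ∘ₗ PsiInv lamhat x y)).PosSemidef) :
    (Choi (Φ ∘ₗ PsiInv lam x y)).PosSemidef := by
  have hratio : √(1 - lamhat) / √(1 - lam) ≤ 1 :=
    div_le_one_of_le₀ (Real.sqrt_le_sqrt (sub_le_sub_left hle 1)) (Real.sqrt_nonneg _)
  rw [psiInv_eq_psiInv_comp_damping hx hxy ⟨hlam, hle.trans_lt hlamhat⟩
    ⟨hlam.trans hle, hlamhat⟩, ← LinearMap.comp_assoc]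
  refine posSemidef_choi_comp_damping hCP ?_ x y
  rw [Complex.star_def, Complex.conj_ofReal]
  exact_mod_cast mul_le_one₀ hratio (by positivity) hratio

/-- if `Φ ∘ Ψ_{λ̂}⁻¹` is CP for some `λ̂ ∈ (0,1)`, then `Φ ∘ Ψ_λ⁻¹` is CP
for all `λ ∈ [0, λ̂]`. -/
theorem cp_of_cp_le (n : ℕ) (x y : Fin n → ℂ)
    (hx : star x ⬝ᵥ x = 1) (hy : star y ⬝ᵥ y = 1) (hxy : star x ⬝ᵥ y = 0)
    (Φ : Matrix (Fin n) (Fin n) ℂ →ₗ[ℂ] Matrix (Fin n) (Fin n) ℂ) (hΦ : IsChannel Φ)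
    (lamhat : ℝ) (hlamhat : lamhat ∈ Set.Ioo (0 : ℝ) 1)
    (hCP : IsCP (Φ ∘ₗ PsiInv lamhat x y)) :
    ∀ lam ∈ Set.Icc (0 : ℝ) lamhat, IsCP (Φ ∘ₗ PsiInv lam x y) := fun _ hlam =>
  cp_of_cp_le_general hx hxy Φ hlam.1 hlam.2 hlamhat.2 hCP

end
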